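/- For every real a > 0, the absolutely convergent integral ∫₁^∞ sin(a·x) · (ln x)²/x² dx equals a·[ γ·(−γ + 2 − ln a)·ln a + (π²/12)·(ln a − 1 + γ) − (2/3)·ζ(3) − 2·ln a + (ln a)² − (1/3)·(ln a)³ − γ³/3 − 2γ + γ² + 2 ] − 2a · Σ_{n=1}^∞ (−a²)^n / ((2n+1)! · (2n)³), where γ is the Euler–Mascheroni constant and ζ(3) = Σ_{n=1}^∞ 1/n³, and the series converges absolutely. -/

import Mathlib

open MeasureTheory Filter Topology Asymptotics


lemma log_term_bound (e : ℝ) (h0 : 0 < e) (h1 : e ≤ 1/2) (m : ℕ) :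
    |e / (m+1) - Real.log (1 + e/(m+1)) - (e^2/2 * (1/((m:ℝ)+1)^2) - e^3/3 * (1/((m:ℝ)+1)^3))|
      ≤ 2 * e^4 * (1/((m:ℝ)+1)^2) := by
  have hm : (1:ℝ) ≤ (m:ℝ)+1 := by simp
  have hm0 : (0:ℝ) < (m:ℝ)+1 := by linarith
  set y := e/((m:ℝ)+1) with hy
  have hy0 : 0 < y := by positivity
  have hye : y ≤ e := div_le_self h0.le hm
  have hab : |-y| = y := by rw [abs_neg, abs_of_pos hy0]
  have h := Real.abs_log_sub_add_sum_range_le (x := -y) (by rw [hab]; linarith) 3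
  rw [hab] at h
  simp only [Finset.sum_range_succ, Finset.sum_range_zero] at h
  have h2 : y^(3+1)/(1-y) ≤ 2 * y^4 := by
    rw [div_le_iff₀ (by linarith)]
    have h5 : 0 ≤ y^4 * (1/2 - y) := mul_nonneg (by positivity) (by linarith)
    linear_combination 2 * h5
  have h3 : y^4 ≤ e^4 * (1/((m:ℝ)+1)^2) := by
    rw [hy, div_pow, div_eq_mul_one_div]
    gcongr
    norm_num
  have h4 : e / (m+1) - Real.log (1 + e/(m+1)) - (e^2/2 * (1/((m:ℝ)+1)^2) - e^3/3 * (1/((m:ℝ)+1)^3))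
     = -(0 + (-y) ^ (0 + 1) / ((0:ℕ) + 1) + (-y) ^ (1 + 1) / ((1:ℕ) + 1) + (-y) ^ (2 + 1) / ((2:ℕ) + 1) + Real.log (1 - -y)) := by
    rw [sub_neg_eq_add, hy]; push_cast; field_simp; ring
  rw [← hy] at h4
  rw [h4, abs_neg]
  linarith

lemma logGammaSeq_eq (e : ℝ) (h0 : 0 < e) (n : ℕ) :
   Real.log e + Real.BohrMollerup.logGammaSeq e n = -e * (harmonic n - Real.log n)
     + ∑ m ∈ Finset.range n, (e / (m+1) - Real.log (1 + e/(m+1))) := by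
  unfold Real.BohrMollerup.logGammaSeq
  rw [Finset.sum_range_succ']
  have h1 : Real.log (n.factorial : ℝ) = ∑ m ∈ Finset.range n, Real.log ((m:ℝ)+1) := by
    induction n with
    | zero => simp
    | succ k ih =>
      rw [Finset.sum_range_succ, ← ih, Nat.factorial_succ]; push_cast
      rw [Real.log_mul (by positivity) (by positivity)]; ring
  have h2 : (harmonic n : ℝ) = ∑ m ∈ Finset.range n, 1/((m:ℝ)+1) := by
    simp [harmonic]
  rw [h1, h2]
  have h3 : ∀ m ∈ Finset.range n, Real.log (e + ((m+1 : ℕ):ℝ)) = Real.log ((m:ℝ)+1) + Real.log (1 + e/(m+1)) := by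
    intro m _
    rw [← Real.log_mul (by positivity) (by positivity)]
    congr 1; push_cast; field_simp; ring
  rw [Finset.sum_congr rfl h3, Finset.sum_add_distrib, Finset.sum_sub_distrib, mul_sub, Finset.mul_sum]
  have : ∑ i ∈ Finset.range n, -e * (1 / ((i:ℝ) + 1)) = - ∑ i ∈ Finset.range n, e/((i:ℝ)+1) := by
    rw [← Finset.sum_neg_distrib]; refine Finset.sum_congr rfl fun i _ => by ring
  rw [this]; simp; ring

lemma logGamma_bound (e : ℝ) (h0 : 0 < e) (h1 : e ≤ 1/2) :
    |Real.log (Real.Gamma (1+e)) - (-Real.eulerMascheroniConstant * e + Real.pi^2/12 * e^2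
      - (∑' n : ℕ, (1 : ℝ) / ((n : ℝ) + 1) ^ 3)/3 * e^3)| ≤ Real.pi^2/3 * e^4 := by
  have hG : Real.log (Real.Gamma (1+e)) = Real.log e + Real.log (Real.Gamma e) := by
    rw [add_comm, Real.Gamma_add_one h0.ne', Real.log_mul h0.ne' (Real.Gamma_pos_of_pos h0).ne']
  have t1 := (Real.BohrMollerup.tendsto_log_gamma h0).const_add (Real.log e)
  rw [← hG] at t1
  have s2 : HasSum (fun n : ℕ => 1/((n:ℝ)+1)^2) (Real.pi^2/6) := by
    have := (hasSum_nat_add_iff' 1).2 hasSum_zeta_two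
    simpa using this
  have s3 : HasSum (fun n : ℕ => 1/((n:ℝ)+1)^3) (∑' n : ℕ, (1 : ℝ) / ((n : ℝ) + 1) ^ 3) := by
    have : Summable (fun n : ℕ => 1/(n:ℝ)^3) := Real.summable_one_div_nat_pow.2 (by norm_num)
    have := (summable_nat_add_iff 1).2 this
    simpa using this.hasSum
  have t2 := s2.tendsto_sum_nat
  have t3 := s3.tendsto_sum_nat
  have t4 := (Real.tendsto_harmonic_sub_log.const_mul (-e)).add ((t2.const_mul (e^2/2)).sub (t3.const_mul (e^3/3)))
  have t5 := (t1.sub t4).abs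
  have := le_of_tendsto_of_tendsto' t5 (t2.const_mul (2*e^4)) (fun n => by
    rw [logGammaSeq_eq e h0]
    rw [show ∀ a b c d : ℝ, a + b - (a + (c-d)) = b - (c-d) by intros; ring, Finset.mul_sum, Finset.mul_sum, Finset.mul_sum,
      ← Finset.sum_sub_distrib, ← Finset.sum_sub_distrib]
    refine (Finset.abs_sum_le_sum_abs _ _).trans (Finset.sum_le_sum fun m _ => log_term_bound e h0 h1 m))
  refine le_trans (le_of_eq ?_) (this.trans (le_of_eq ?_))
  · congr 1; ring
  · ring



lemma poly_unique_step (c : ℝ) (g : ℝ → ℝ) (K : ℝ) (hg : Tendsto g (𝓝[>] 0) (𝓝 K)) (k : ℕ)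
    (h : (fun e : ℝ => c + e * g e) =O[𝓝[>] 0] fun e => e ^ (k+1)) :
    c = 0 ∧ g =O[𝓝[>] 0] fun e => e ^ k := by
  have t0 : Tendsto (fun e : ℝ => e) (𝓝[>] 0) (𝓝 0) := tendsto_nhdsWithin_of_tendsto_nhds tendsto_id
  have hc : c = 0 := by
    have h1 : Tendsto (fun e : ℝ => c + e * g e) (𝓝[>] 0) (𝓝 (c + 0 * K)) := (t0.mul hg).const_add c
    have h2 : Tendsto (fun e : ℝ => c + e * g e) (𝓝[>] 0) (𝓝 0) := by
      refine h.trans_tendsto ?_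
      simpa using t0.pow (k+1)
    simpa using tendsto_nhds_unique h1 h2
  refine ⟨hc, ?_⟩
  subst hc
  obtain ⟨C, hC⟩ := h.bound
  refine IsBigO.of_bound C ?_
  filter_upwards [hC, self_mem_nhdsWithin] with e he hpos
  have hpos : 0 < e := hpos
  simp only [zero_add, norm_mul, pow_succ] at he
  have : 0 < ‖e‖ := by simpa using hpos.ne'
  nlinarith

lemma poly_unique (c0 c1 c2 c3 : ℝ)
    (h : (fun e : ℝ => c0 + c1 * e + c2 * e^2 + c3 * e^3) =O[𝓝[>] 0] fun e => e ^ 4) :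
    c0 = 0 ∧ c1 = 0 ∧ c2 = 0 ∧ c3 = 0 := by
  have tt : ∀ f : ℝ → ℝ, Continuous f → Tendsto f (𝓝[>] 0) (𝓝 (f 0)) := fun f hf =>
    tendsto_nhdsWithin_of_tendsto_nhds hf.continuousAt
  obtain ⟨h0, h⟩ := poly_unique_step c0 (fun e => c1 + e * (c2 + e * (c3 + e * 0))) _ (tt _ (by fun_prop)) 3
    (h.congr_left fun e => by ring)
  obtain ⟨h1, h⟩ := poly_unique_step _ _ _ (tt _ (by fun_prop)) 2 h
  obtain ⟨h2, h⟩ := poly_unique_step _ _ _ (tt _ (by fun_prop)) 1 h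
  obtain ⟨h3, h⟩ := poly_unique_step _ _ _ (tt _ (by fun_prop)) 0 h
  exact ⟨h0, h1, h2, h3⟩

lemma bigO_of_cont (f R : ℝ → ℝ) (hR : Continuous R) (h : ∀ e, f e = e^4 * R e) :
    f =O[𝓝[>] 0] fun e => e ^ 4 := by
  have : R =O[𝓝[>] 0] (fun _ => (1:ℝ)) :=
    (tendsto_nhdsWithin_of_tendsto_nhds hR.continuousAt : Tendsto R (𝓝[>] 0) (𝓝 (R 0))).isBigO_one ℝ
  have := (isBigO_refl (fun e : ℝ => e^4) (𝓝[>] 0)).mul this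
  simpa [← h] using this

lemma mul4 (f g p q : ℝ → ℝ) (hf : f =O[𝓝[>] 0] (fun _ => (1:ℝ))) (hq : Continuous q)
    (h1 : (fun e => f e - p e) =O[𝓝[>] 0] fun e => e ^ 4)
    (h2 : (fun e => g e - q e) =O[𝓝[>] 0] fun e => e ^ 4) :
    (fun e => f e * g e - p e * q e) =O[𝓝[>] 0] fun e => e ^ 4 := by
  have hq : q =O[𝓝[>] 0] (fun _ => (1:ℝ)) :=
    (tendsto_nhdsWithin_of_tendsto_nhds hq.continuousAt : Tendsto q (𝓝[>] 0) (𝓝 (q 0))).isBigO_one ℝ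
  have := ((hf.mul h2).congr_right fun e => one_mul _).add ((h1.mul hq).congr_right fun e => mul_one _)
  exact this.congr_left fun e => by ring

lemma exp_cos_expand (u : ℝ → ℝ) (c b d : ℝ)
    (hu : (fun e => u e - (c * e + b * e^2 + d * e^3)) =O[𝓝[>] 0] fun e => e ^ 4) :
    (fun e => Real.exp (u e) * Real.cos (Real.pi * e / 2) -
      (1 + c * e + (c^2/2 + b - Real.pi^2/8) * e^2 +
        (c^3/6 + c * b + d - c * Real.pi^2/8) * e^3)) =O[𝓝[>] 0] fun e => e ^ 4 := by
  have t0 : Tendsto (fun e : ℝ => e) (𝓝[>] 0) (𝓝 0) := tendsto_nhdsWithin_of_tendsto_nhds tendsto_id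
  set P : ℝ → ℝ := fun e => c * e + b * e^2 + d * e^3 with hP
  have hPc : Continuous P := by fun_prop
  have hu1 : u =O[𝓝[>] 0] fun e => e := by
    have h1 : (fun e : ℝ => e^4) =O[𝓝[>] 0] fun e => e := by
      have := (isBigO_refl (fun e : ℝ => e) (𝓝[>] 0)).mul ((t0.pow 3).isBigO_one ℝ)
      exact (this.congr_right fun e => by ring).congr_left fun e => by ring
    have h2 : P =O[𝓝[>] 0] fun e => e := by
      have hc : Continuous (fun e : ℝ => c + b * e + d * e^2) := by fun_prop
      have h3 : Tendsto (fun e : ℝ => c + b * e + d * e^2) (𝓝[>] 0) _ := tendsto_nhdsWithin_of_tendsto_nhds hc.continuousAt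
      have := (isBigO_refl (fun e : ℝ => e) (𝓝[>] 0)).mul (h3.isBigO_one ℝ)
      refine (this.congr_right fun e => by ring).congr_left fun e => by simp only [hP]; ring
    exact ((hu.trans h1).add h2).congr_left fun e => by ring
  have hut : Tendsto u (𝓝[>] 0) (𝓝 0) := hu1.trans_tendsto t0
  have ub := hut.isBigO_one ℝ
  have e1 := ((Real.exp_sub_sum_range_isBigO_pow 4).comp_tendsto hut).trans (hu1.pow 4)
  have m2 := mul4 u u P P ub hPc hu hu
  have m3 := mul4 u _ P _ ub (by fun_prop) hu m2
  have e2 : (fun e => Real.exp (u e) - (1 + P e + P e * P e / 2 + P e * (P e * P e)/6)) =O[𝓝[>] 0] fun e => e ^ 4 := by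
    refine (((e1.add hu).add (m2.const_mul_left (1/2))).add (m3.const_mul_left (1/6))).congr_left fun e => ?_
    simp [Finset.sum_range_succ, Nat.factorial]
    ring
  have hcos : (fun e => Real.cos (Real.pi * e / 2) - (1 - (Real.pi * e / 2)^2/2)) =O[𝓝[>] 0] fun e => e ^ 4 := by
    refine IsBigO.of_bound ((Real.pi/2)^4 * (5/96)) ?_
    have : Tendsto (fun e : ℝ => |Real.pi * e / 2|) (𝓝[>] 0) (𝓝 0) := by
      simpa using ((t0.const_mul Real.pi).div_const 2).abs
    filter_upwards [this.eventually_le_const one_pos] with e he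
    refine (Real.cos_bound he).trans (le_of_eq ?_)
    rw [Real.norm_eq_abs, abs_pow, abs_div, abs_mul, abs_of_pos Real.pi_pos, abs_two]; ring
  have eb : (fun e => Real.exp (u e)) =O[𝓝[>] 0] (fun _ => (1:ℝ)) := 
    (hut.rexp).isBigO_one ℝ
  have m4 := mul4 _ _ _ _ eb (by fun_prop) e2 hcos
  refine (m4.add (bigO_of_cont (fun e => (1 + P e + P e * P e / 2 + P e * (P e * P e)/6) * (1 - (Real.pi * e / 2)^2/2)
     - (1 + c * e + (c^2/2 + b - Real.pi^2/8) * e^2 +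
        (c^3/6 + c * b + d - c * Real.pi^2/8) * e^3)) 
        (fun e => (b^2/2 + c*d + c^2*b/2*(1) + e*(b*d) + e^2*d^2/2 + (c*b^2/2 + c^2*d/2)*e + (b^3/6 + c*b*d)*e^2 + (b^2*d/2+c*d^2/2)*e^3 + b*d^2/2*e^4 + d^3/6*e^5) 
         + (-Real.pi^2/8) * (c^2/2 + b + (d + c*b + c^3/6)*e + e^2*(b^2/2 + c*d + c^2*b/2*(1) + e*(b*d) + e^2*d^2/2 + (c*b^2/2 + c^2*d/2)*e + (b^3/6 + c*b*d)*e^2 + (b^2*d/2+c*d^2/2)*e^3 + b*d^2/2*e^4 + d^3/6*e^5))) 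
        (by fun_prop) (fun e => by simp only [hP]; ring))).congr_left fun e => by ring


lemma exp_rem (y : ℝ) (hy : 0 ≤ y) : |Real.exp y - 1 - y - y^2/2| ≤ y^3 * Real.exp y := by
  have h := Complex.norm_exp_sub_sum_le_norm_mul_exp (y:ℂ) 3
  simp only [Finset.sum_range_succ, Finset.sum_range_zero, Complex.norm_real, Real.norm_eq_abs, abs_of_nonneg hy] at h
  refine le_trans (le_of_eq ?_) h
  rw [← Real.norm_eq_abs, ← Complex.norm_real]
  congr 1
  push_cast
  simp [Nat.factorial]; ring

lemma dom_integrable : IntegrableOn (fun x : ℝ => (1 + Real.log x)^3 * x^(-(3/2):ℝ)) (Set.Ioi 1) := by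
  have h : IntegrableOn (fun x : ℝ => 13^3 * x^(-(5/4):ℝ)) (Set.Ioi 1) :=
    (integrableOn_Ioi_rpow_of_lt (by norm_num) one_pos).const_mul _
  refine Integrable.mono' h (by fun_prop) ?_
  refine (ae_restrict_iff' measurableSet_Ioi).2 (ae_of_all _ fun x hx => ?_)
  have hx : 1 < x := hx
  have hx0 : 0 < x := by linarith
  have hl : 0 ≤ Real.log x := Real.log_nonneg hx.le
  rw [Real.norm_of_nonneg (by positivity)]
  have h1 := Real.log_le_rpow_div hx0.le (show (0:ℝ) < 1/12 by norm_num)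
  have h2 : 1 ≤ x^(1/12:ℝ) := Real.one_le_rpow hx.le (by norm_num)
  have h3 : 1 + Real.log x ≤ 13 * x^(1/12:ℝ) := by linarith
  calc (1 + Real.log x)^3 * x^(-(3/2):ℝ) ≤ (13 * x^(1/12:ℝ))^3 * x^(-(3/2):ℝ) := by gcongr
    _ = 13^3 * x^(-(5/4):ℝ) := by
      rw [mul_pow, ← Real.rpow_natCast (x^(1/12:ℝ)), ← Real.rpow_mul hx0.le, mul_assoc, ← Real.rpow_add hx0]
      norm_num

lemma int_of_dom (f : ℝ → ℝ) (hf : Measurable f)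
   (h : ∀ x, 1 < x → |f x| ≤ (1 + Real.log x)^3 * x^(-(3/2):ℝ)) : IntegrableOn f (Set.Ioi 1) :=
  Integrable.mono' dom_integrable hf.aestronglyMeasurable
    ((ae_restrict_iff' measurableSet_Ioi).2 (ae_of_all _ h))

lemma int_log_pow (a : ℝ) (k : ℕ) (hk : k ≤ 3) :
    IntegrableOn (fun x : ℝ => Real.sin (a * x) * Real.log x ^ k / x ^ 2) (Set.Ioi (1 : ℝ)) := by
  refine int_of_dom _ (by fun_prop) fun x hx => ?_
  have hx0 : 0 < x := by linarith
  have hl : 0 ≤ Real.log x := Real.log_nonneg hx.le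
  rw [abs_div, abs_mul, div_eq_mul_inv, abs_of_pos (show 0 < x^2 by positivity), abs_of_nonneg (show 0 ≤ Real.log x ^ k by positivity)]
  gcongr
  · calc |Real.sin (a*x)| * Real.log x ^ k ≤ 1 * (1 + Real.log x)^k := by
          gcongr
          · exact Real.abs_sin_le_one _
          · linarith
      _ ≤ (1 + Real.log x)^3 := by
          rw [one_mul]; exact pow_le_pow_right₀ (by linarith) hk
  · rw [← Real.rpow_natCast, ← Real.rpow_neg hx0.le]
    exact Real.rpow_le_rpow_of_exponent_le hx.le (by norm_num)

lemma int_I (a e : ℝ) (h1 : e ≤ 1/2) :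
    IntegrableOn (fun x : ℝ => Real.sin (a * x) * x^(e-2)) (Set.Ioi (1 : ℝ)) := by
  refine int_of_dom _ (by fun_prop) fun x hx => ?_
  have hx0 : 0 < x := by linarith
  have hl : 0 ≤ Real.log x := Real.log_nonneg hx.le
  rw [abs_mul, abs_of_pos (Real.rpow_pos_of_pos hx0 _)]
  gcongr
  · exact (Real.abs_sin_le_one _).trans (one_le_pow₀ (by linarith))
  · exact hx.le
  · linarith

lemma I_expand (a : ℝ) : ∃ I0 I1 : ℝ, 
    (fun e : ℝ => (∫ x in Set.Ioi (1 : ℝ), Real.sin (a * x) * x^(e-2)) - 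
     (I0 + I1 * e + (∫ x in Set.Ioi (1 : ℝ), Real.sin (a * x) * Real.log x ^ 2 / x ^ 2)/2 * e^2)) =O[𝓝[>] 0] fun e => e^3 := by
  refine ⟨∫ x in Set.Ioi (1 : ℝ), Real.sin (a * x) * Real.log x ^ 0 / x ^ 2, 
    ∫ x in Set.Ioi (1 : ℝ), Real.sin (a * x) * Real.log x ^ 1 / x ^ 2, ?_⟩
  refine IsBigO.of_bound (∫ x in Set.Ioi (1 : ℝ), (1 + Real.log x)^3 * x^(-(3/2):ℝ)) ?_
  filter_upwards [Ioo_mem_nhdsGT (show (0:ℝ) < 1/2 by norm_num)] with e he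
  obtain ⟨he0, he1⟩ := he
  have i0 := int_log_pow a 0 (by norm_num)
  have i1 := (int_log_pow a 1 (by norm_num)).mul_const e
  have i2 := (int_log_pow a 2 (by norm_num)).mul_const (e^2/2)
  rw [show (∫ x in Set.Ioi (1 : ℝ), Real.sin (a * x) * Real.log x ^ 2 / x ^ 2)/2 * e^2 = (∫ x in Set.Ioi (1 : ℝ), Real.sin (a * x) * Real.log x ^ 2 / x ^ 2) * (e^2/2) by ring,
    ← integral_mul_const, ← integral_mul_const]
  have i01 : IntegrableOn (fun x : ℝ => Real.sin (a * x) * Real.log x ^ 0 / x ^ 2 + Real.sin (a * x) * Real.log x ^ 1 / x ^ 2 * e) (Set.Ioi 1) := i0.add i1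
  have i012 : IntegrableOn (fun x : ℝ => Real.sin (a * x) * Real.log x ^ 0 / x ^ 2 + Real.sin (a * x) * Real.log x ^ 1 / x ^ 2 * e + Real.sin (a * x) * Real.log x ^ 2 / x ^ 2 * (e^2/2)) (Set.Ioi 1) := i01.add i2
  have ii := int_I a e he1.le
  rw [← integral_add i0 i1, ← integral_add i01 i2, ← integral_sub ii i012]
  rw [mul_comm, norm_pow, Real.norm_of_nonneg he0.le, ← integral_const_mul]
  refine norm_integral_le_of_norm_le (dom_integrable.const_mul _) ?_
  refine (ae_restrict_iff' measurableSet_Ioi).2 (ae_of_all _ fun x hx => ?_)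
  have hx : 1 < x := hx
  have hx0 : 0 < x := by linarith
  have hl : 0 ≤ Real.log x := Real.log_nonneg hx.le
  have hr : x^(e-2) = Real.exp (e * Real.log x) / x^2 := by
    rw [Real.rpow_sub hx0, Real.rpow_def_of_pos hx0, mul_comm]; norm_num
  have key : Real.sin (a * x) * x^(e-2) - (Real.sin (a * x) * Real.log x ^ 0 / x ^ 2 + Real.sin (a * x) * Real.log x ^ 1 / x ^ 2 * e + Real.sin (a * x) * Real.log x ^ 2 / x ^ 2 * (e^2/2))
     = Real.sin (a*x) * (Real.exp (e * Real.log x) - 1 - e * Real.log x - (e * Real.log x)^2/2) * (x^2)⁻¹ := by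
    rw [hr]; ring
  rw [key, Real.norm_eq_abs, abs_mul, abs_mul, abs_of_pos (show 0 < (x^2)⁻¹ by positivity)]
  calc _ ≤ 1 * ((e * Real.log x)^3 * Real.exp (e * Real.log x)) * (x^2)⁻¹ := by
        gcongr
        · exact Real.abs_sin_le_one _
        · exact exp_rem _ (by positivity)
    _ = e^3 * (Real.log x ^3 * x^(e-2)) := by rw [hr]; ring
    _ ≤ _ := by
        gcongr
        · linarith
        · exact hx.le
        · linarith


lemma fact_summable (a : ℝ) : Summable (fun n : ℕ => |a|^(2*n+1) / ((2*n+1).factorial : ℝ)) :=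
  (Real.summable_pow_div_factorial |a|).comp_injective (i := fun n : ℕ => 2*n+1) (fun m n h => by simpa using h)

/-- coefficients -/
noncomputable def bco (a : ℝ) (n : ℕ) : ℝ := (-1)^n * a^(2*n+1) / ((2*n+1).factorial : ℝ)

lemma bco_abs (a : ℝ) (n : ℕ) : |bco a n| = |a|^(2*n+1) / ((2*n+1).factorial : ℝ) := by
  unfold bco
  rw [abs_div, abs_mul, abs_pow, abs_pow, abs_neg, abs_one, one_pow, one_mul, Nat.abs_cast]

lemma bco_summable (a : ℝ) : Summable (fun n => |bco a n|) := by
  simpa only [bco_abs] using fact_summable a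

lemma S_hasSum (a e : ℝ) (h0 : 0 < e) :
    HasSum (fun n : ℕ => bco a n / (2*n+e)) (∫ x in Set.Ioc (0:ℝ) 1, Real.sin (a * x) * x^(e-2)) := by
  have hint : ∀ n : ℕ, IntegrableOn (fun x : ℝ => x^(2*n+e-1)) (Set.Ioc 0 1) := fun n => by
    rw [← intervalIntegrable_iff_integrableOn_Ioc_of_le zero_le_one]
    exact intervalIntegral.intervalIntegrable_rpow' (by have : (0:ℝ) ≤ n := n.cast_nonneg; linarith)
  have hval : ∀ n : ℕ, ∫ x in Set.Ioc (0:ℝ) 1, x^(2*n+e-1) = 1/(2*n+e) := fun n => by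
    have hn : (0:ℝ) ≤ n := n.cast_nonneg
    rw [← intervalIntegral.integral_of_le zero_le_one, integral_rpow (Or.inl (by linarith))]
    rw [Real.zero_rpow (by linarith)]; simp
  have := hasSum_integral_of_summable_integral_norm (μ := volume.restrict (Set.Ioc (0:ℝ) 1))
    (F := fun (n : ℕ) (x : ℝ) => bco a n * x^(2*n+e-1)) (fun n => (hint n).const_mul _) ?_
  · have e1 : ∫ x in Set.Ioc (0:ℝ) 1, ∑' n : ℕ, bco a n * x^(2*n+e-1) = ∫ x in Set.Ioc (0:ℝ) 1, Real.sin (a * x) * x^(e-2) := by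
      refine setIntegral_congr_fun measurableSet_Ioc fun x hx => ?_
      have hx0 : 0 < x := hx.1
      have hs := (Real.hasSum_sin (a*x)).mul_right (x^(e-2))
      refine HasSum.tsum_eq (hs.congr_fun ?_)
      intro n
      simp only [bco]
      have : x^(2*n+e-1) = x^(2*n+1) * x^(e-2) := by
        rw [← Real.rpow_natCast, ← Real.rpow_add hx0]; push_cast; ring_nf
      rw [this, mul_pow]; ring
    rw [e1] at this
    refine this.congr_fun fun n => ?_
    rw [integral_const_mul, hval]; ring
  · have : ∀ n : ℕ, ∫ x in Set.Ioc (0:ℝ) 1, ‖bco a n * x^(2*n+e-1)‖ = |bco a n| * (1/(2*n+e)) := fun n => by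
      rw [← hval, ← integral_const_mul]
      refine setIntegral_congr_fun measurableSet_Ioc fun x hx => ?_
      simp only [norm_mul, Real.norm_eq_abs]
      rw [abs_of_pos (Real.rpow_pos_of_pos hx.1 _)]
    simp only [this]
    refine Summable.of_nonneg_of_le (fun n => by positivity) (fun n => ?_) ((bco_summable a).mul_right (1/e))
    gcongr
    have : (0:ℝ) ≤ n := n.cast_nonneg
    linarith

lemma div_summable (a : ℝ) (w : ℕ → ℝ) (hw : ∀ n, |w n| ≤ 1) : Summable (fun n => bco a (n+1) * w n) := by
  refine Summable.of_norm_bounded ((summable_nat_add_iff 1).2 (bco_summable a)) fun n => ?_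
  rw [norm_mul]
  exact mul_le_of_le_one_right (norm_nonneg _) (hw n)

lemma w_bound (n k : ℕ) : |1 / (2 * ((n:ℝ)+1))^k| ≤ 1 := by
  rw [abs_of_nonneg (by positivity), div_le_one (by positivity)]
  apply one_le_pow₀
  have : (0:ℝ) ≤ n := n.cast_nonneg
  linarith

lemma S_expand (a : ℝ) : ∃ B0 B1 : ℝ, 
    (fun e : ℝ => (∫ x in Set.Ioc (0 : ℝ) 1, Real.sin (a * x) * x^(e-2)) - a / e - 
     (B0 + B1 * e + (∑' n : ℕ, bco a (n+1) * (1 / (2 * ((n:ℝ)+1))^3)) * e^2)) =O[𝓝[>] 0] fun e => e^3 := by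
  refine ⟨∑' n : ℕ, bco a (n+1) * (1 / (2 * ((n:ℝ)+1))^1), -∑' n : ℕ, bco a (n+1) * (1 / (2 * ((n:ℝ)+1))^2), ?_⟩
  refine IsBigO.of_bound (∑' n : ℕ, |bco a (n+1)|) ?_
  filter_upwards [self_mem_nhdsWithin] with e he
  have he : 0 < e := he
  have s0 := (hasSum_nat_add_iff' 1).2 (S_hasSum a e he)
  have s1 := (div_summable a _ (fun n => w_bound n 1)).hasSum
  have s2 := ((div_summable a _ (fun n => w_bound n 2)).hasSum.mul_right e).neg
  have s3 := (div_summable a _ (fun n => w_bound n 3)).hasSum.mul_right (e^2)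
  have s := s0.sub ((s1.add s2).add s3)
  have hb : ∑ i ∈ Finset.range 1, bco a i / (2*i+e) = a / e := by simp [bco]
  rw [hb] at s
  rw [neg_mul, ← s.tsum_eq, norm_pow, Real.norm_of_nonneg he.le, ← tsum_mul_right]
  refine tsum_of_norm_bounded (((summable_nat_add_iff 1).2 (bco_summable a)).mul_right _).hasSum fun n => ?_
  have key : bco a (n+1) / (2 * ((n+1 : ℕ):ℝ) + e) - (bco a (n+1) * (1 / (2 * ((n:ℝ)+1))^1) + -(bco a (n+1) * (1 / (2 * ((n:ℝ)+1))^2) * e) + bco a (n+1) * (1 / (2 * ((n:ℝ)+1))^3) * e^2)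
     = - (bco a (n+1) * (e^3 * (1 / ((2 * ((n:ℝ)+1))^3 * (2 * ((n:ℝ)+1)+e))))) := by
    push_cast
    field_simp
    ring
  rw [key, norm_neg, norm_mul, Real.norm_eq_abs]
  gcongr
  rw [Real.norm_of_nonneg (by positivity)]
  refine mul_le_of_le_one_right (by positivity) ?_
  rw [div_le_one (by positivity)]
  have hn : (0:ℝ) ≤ n := n.cast_nonneg
  have : 1 ≤ (2 * ((n:ℝ)+1))^3 := one_le_pow₀ (by linarith)
  nlinarith


lemma int_sin_exp (a t : ℝ) (ht : 0 < t) :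
    IntegrableOn (fun x : ℝ => Real.sin (a*x) * Real.exp (-(t*x))) (Set.Ioi 0) ∧
    ∫ x in Set.Ioi (0:ℝ), Real.sin (a*x) * Real.exp (-(t*x)) = a / (a^2+t^2) := by
  have hexp : IntegrableOn (fun x : ℝ => Real.exp (-(t*x))) (Set.Ioi 0) := by
    simpa using exp_neg_integrableOn_Ioi 0 ht
  have hi : IntegrableOn (fun x : ℝ => Real.sin (a*x) * Real.exp (-(t*x))) (Set.Ioi 0) := by
    refine Integrable.mono' hexp (by fun_prop) (ae_of_all _ fun x => ?_)
    rw [norm_mul, Real.norm_eq_abs, Real.norm_of_nonneg (Real.exp_pos _).le]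
    exact mul_le_of_le_one_left (Real.exp_pos _).le (Real.abs_sin_le_one _)
  refine ⟨hi, ?_⟩
  have hd : (0:ℝ) < a^2+t^2 := by positivity
  have h := integral_Ioi_of_hasDerivAt_of_tendsto' (a := (0:ℝ)) (m := 0)
    (f := fun x => -(t * Real.sin (a*x) + a * Real.cos (a*x)) * Real.exp (-(t*x)) / (a^2+t^2))
    (f' := fun x : ℝ => Real.sin (a*x) * Real.exp (-(t*x))) ?_ hi ?_
  · rw [h]; simp; ring
  · intro x _
    have h1 : HasDerivAt (fun x : ℝ => a * x) a x := by simpa using (hasDerivAt_id x).const_mul a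
    have h2 : HasDerivAt (fun x : ℝ => -(t * x)) (-t) x := by
      have h3 : HasDerivAt (fun x : ℝ => -t * x) (-t) x := by simpa using (hasDerivAt_id x).const_mul (-t)
      simpa only [neg_mul] using h3
    have := ((((h1.sin.const_mul t).add (h1.cos.const_mul a)).neg.mul h2.exp).div_const (a^2+t^2))
    refine this.congr_deriv ?_
    simp only [Pi.add_apply, Pi.neg_apply]
    rw [div_eq_iff hd.ne']
    ring
  · have te : Tendsto (fun x : ℝ => (|t| + |a|) * Real.exp (-(t*x)) / (a^2+t^2)) atTop (𝓝 0) := by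
      have : Tendsto (fun x : ℝ => Real.exp (-(t*x))) atTop (𝓝 0) :=
        Real.tendsto_exp_neg_atTop_nhds_zero.comp (tendsto_id.const_mul_atTop ht)
      simpa using (this.const_mul (|t|+|a|)).div_const (a^2+t^2)
    refine squeeze_zero_norm (fun x => ?_) te
    rw [norm_div, norm_mul, norm_neg, Real.norm_of_nonneg (Real.exp_pos _).le, Real.norm_of_nonneg hd.le]
    gcongr
    refine (norm_add_le _ _).trans ?_
    rw [norm_mul, norm_mul]
    gcongr
    · exact mul_le_of_le_one_right (norm_nonneg _) (Real.abs_sin_le_one _)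
    · exact mul_le_of_le_one_right (norm_nonneg _) (Real.abs_cos_le_one _)

lemma int_pow_exp (s v : ℝ) (hs : 0 < s) (hv : 0 < v) :
    IntegrableOn (fun t : ℝ => t^(s-1) * Real.exp (-(v*t))) (Set.Ioi 0) ∧
    ∫ t in Set.Ioi (0:ℝ), t^(s-1) * Real.exp (-(v*t)) = v^(-s) * Real.Gamma s := by
  constructor
  · have := integrableOn_rpow_mul_exp_neg_mul_rpow (s := s-1) (p := 1) (b := v) (by linarith) one_pos hv
    simpa using this
  · rw [Real.integral_rpow_mul_exp_neg_mul_Ioi hs hv]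
    rw [one_div, Real.inv_rpow hv.le, Real.rpow_neg hv.le]

lemma int_J (a e : ℝ) (h0 : 0 < e) (h1 : e < 1) :
    IntegrableOn (fun x : ℝ => Real.sin (a * x) * x^(e-2)) (Set.Ioi (0 : ℝ)) := by
  rw [← Set.Ioc_union_Ioi_eq_Ioi (zero_le_one' ℝ)]
  refine IntegrableOn.union ?_ ?_
  · have : IntegrableOn (fun x : ℝ => |a| * x^(e-1)) (Set.Ioc 0 1) := by
      rw [← intervalIntegrable_iff_integrableOn_Ioc_of_le zero_le_one]
      exact (intervalIntegral.intervalIntegrable_rpow' (by linarith)).const_mul _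
    refine Integrable.mono' this (by fun_prop) ?_
    refine (ae_restrict_iff' measurableSet_Ioc).2 (ae_of_all _ fun x hx => ?_)
    have hx0 : 0 < x := hx.1
    rw [norm_mul, Real.norm_of_nonneg (Real.rpow_pos_of_pos hx0 _).le, Real.norm_eq_abs]
    have h2 : x^(e-1) = x * x^(e-2) := by
      rw [← Real.rpow_one_add' hx0.le (by linarith)]; ring_nf
    rw [h2, ← mul_assoc]
    gcongr
    refine (Real.abs_sin_le_abs).trans ?_
    rw [abs_mul, abs_of_pos hx0]
  · have : IntegrableOn (fun x : ℝ => x^(e-2)) (Set.Ioi 1) := integrableOn_Ioi_rpow_of_lt (by linarith) one_pos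
    refine Integrable.mono' this (by fun_prop) ?_
    refine (ae_restrict_iff' measurableSet_Ioi).2 (ae_of_all _ fun x hx => ?_)
    have hx0 : 0 < x := lt_trans one_pos hx
    rw [norm_mul, Real.norm_of_nonneg (Real.rpow_pos_of_pos hx0 _).le]
    exact mul_le_of_le_one_left (Real.rpow_pos_of_pos hx0 _).le (Real.abs_sin_le_one _)

lemma fubini1 (a e : ℝ) (h0 : 0 < e) (h1 : e < 1) :
    Real.Gamma (2-e) * ∫ x in Set.Ioi (0:ℝ), Real.sin (a * x) * x^(e-2) 
     = ∫ t in Set.Ioi (0:ℝ), t^(1-e) * (a / (a^2+t^2)) := by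
  have hsw := integral_integral_swap (μ := volume.restrict (Set.Ioi (0:ℝ))) (ν := volume.restrict (Set.Ioi (0:ℝ)))
    (f := fun x t : ℝ => Real.sin (a*x) * (t^(2-e-1) * Real.exp (-(x*t)))) ?_
  · rw [← integral_const_mul]
    refine Eq.trans ?_ (hsw.trans ?_)
    · refine setIntegral_congr_fun measurableSet_Ioi fun x hx => ?_
      rw [integral_const_mul, (int_pow_exp (2-e) x (by linarith) hx).2, neg_sub]; ring
    · refine setIntegral_congr_fun measurableSet_Ioi fun t ht => ?_
      rw [← (int_sin_exp a t ht).2, ← integral_const_mul]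
      congr 1; ext x
      rw [mul_comm x t]; ring_nf
  · rw [integrable_prod_iff]
    · constructor
      · refine (ae_restrict_iff' measurableSet_Ioi).2 (ae_of_all _ fun x hx => ?_)
        exact (int_pow_exp (2-e) x (by linarith) hx).1.const_mul (Real.sin (a*x))
      · refine ((int_J a e h0 h1).norm.mul_const (Real.Gamma (2-e))).congr ?_
        refine (ae_restrict_iff' measurableSet_Ioi).2 (ae_of_all _ fun x hx => ?_)
        have hx0 : 0 < x := hx
        simp only [Function.uncurry]
        have : ∀ t ∈ Set.Ioi (0:ℝ), ‖Real.sin (a*x) * (t^(2-e-1) * Real.exp (-(x*t)))‖ = |Real.sin (a*x)| * (t^(2-e-1) * Real.exp (-(x*t))) := by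
          intro t ht
          have ht : 0 < t := ht
          rw [norm_mul, Real.norm_eq_abs, Real.norm_of_nonneg (by positivity)]
        rw [setIntegral_congr_fun measurableSet_Ioi this, integral_const_mul, (int_pow_exp (2-e) x (by linarith) hx).2, neg_sub,
          norm_mul, Real.norm_eq_abs, Real.norm_of_nonneg (by positivity)]
        ring
    · apply Measurable.aestronglyMeasurable
      unfold Function.uncurry
      fun_prop

lemma fubini2 (a e : ℝ) (ha : 0 < a) (h0 : 0 < e) (h1 : e < 1) :
    ∫ t in Set.Ioi (0:ℝ), t^(1-e) * (a / (a^2+t^2)) = a * (a^2)^(-(e/2)) * (1/2) * Real.Gamma (1 - e/2) * Real.Gamma (e/2) := by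
  have inner : ∀ v : ℝ, 0 < v → 
      IntegrableOn (fun t : ℝ => t^(1-e) * Real.exp (-v * t^(2:ℝ))) (Set.Ioi 0) ∧ 
      ∫ t in Set.Ioi (0:ℝ), t^(1-e) * Real.exp (-v * t^(2:ℝ)) = v^(e/2-1) * (1/2) * Real.Gamma (1-e/2) := by
    intro v hv
    constructor
    · exact integrableOn_rpow_mul_exp_neg_mul_rpow (by linarith) (by norm_num) hv
    · rw [integral_rpow_mul_exp_neg_mul_rpow (by norm_num) (by linarith) hv]
      rw [show -(1 - e + 1)/2 = e/2-1 by ring, show (1-e+1)/2 = 1 - e/2 by ring]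
  have outer := int_pow_exp (e/2) (a^2) (by linarith) (by positivity)
  have hsw := integral_integral_swap (μ := volume.restrict (Set.Ioi (0:ℝ))) (ν := volume.restrict (Set.Ioi (0:ℝ)))
    (f := fun v t : ℝ => Real.exp (-(a^2*v)) * (t^(1-e) * Real.exp (-v * t^(2:ℝ)))) ?_
  · have l1 : ∫ v in Set.Ioi (0:ℝ), ∫ t in Set.Ioi (0:ℝ), Real.exp (-(a^2*v)) * (t^(1-e) * Real.exp (-v * t^(2:ℝ)))
       = (a^2)^(-(e/2)) * Real.Gamma (e/2) * ((1/2) * Real.Gamma (1-e/2)) := by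
      rw [← outer.2, ← integral_mul_const]
      refine setIntegral_congr_fun measurableSet_Ioi fun v hv => ?_
      rw [integral_const_mul, (inner v hv).2]; ring
    have l2 : ∫ t in Set.Ioi (0:ℝ), ∫ v in Set.Ioi (0:ℝ), Real.exp (-(a^2*v)) * (t^(1-e) * Real.exp (-v * t^(2:ℝ)))
       = ∫ t in Set.Ioi (0:ℝ), t^(1-e) * (1 / (a^2+t^2)) := by
      refine setIntegral_congr_fun measurableSet_Ioi fun t ht => ?_
      have := (int_pow_exp 1 (a^2+t^2) one_pos (by positivity)).2
      rw [Real.Gamma_one, mul_one, Real.rpow_neg_one] at this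
      rw [one_div, ← this, ← integral_const_mul]
      congr 1; ext v
      rw [Real.rpow_two, sub_self, Real.rpow_zero, one_mul, show -((a^2+t^2)*v) = -(a^2*v) + -v*t^2 by ring, Real.exp_add]; ring
    have : ∫ t in Set.Ioi (0:ℝ), t^(1-e) * (a / (a^2+t^2)) = a * ∫ t in Set.Ioi (0:ℝ), t^(1-e) * (1 / (a^2+t^2)) := by
      rw [← integral_const_mul]; congr 1; ext t; ring
    rw [this, ← l2, ← hsw, l1]; ring
  · rw [integrable_prod_iff]
    · constructor
      · refine (ae_restrict_iff' measurableSet_Ioi).2 (ae_of_all _ fun v hv => ?_)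
        exact (inner v hv).1.const_mul (Real.exp (-(a^2*v)))
      · refine (outer.1.mul_const ((1/2) * Real.Gamma (1-e/2))).congr ?_
        refine (ae_restrict_iff' measurableSet_Ioi).2 (ae_of_all _ fun v hv => ?_)
        simp only [Function.uncurry]
        have : ∀ t ∈ Set.Ioi (0:ℝ), ‖Real.exp (-(a^2*v)) * (t^(1-e) * Real.exp (-v * t^(2:ℝ)))‖ = Real.exp (-(a^2*v)) * (t^(1-e) * Real.exp (-v * t^(2:ℝ))) := by
          intro t ht
          have ht : 0 < t := ht
          rw [Real.norm_of_nonneg (by positivity)]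
        rw [setIntegral_congr_fun measurableSet_Ioi this, integral_const_mul, (inner v hv).2]
        ring
    · apply Measurable.aestronglyMeasurable
      unfold Function.uncurry
      fun_prop

lemma J_val (a e : ℝ) (ha : 0 < a) (h0 : 0 < e) (h1 : e < 1) :
    e * (1-e) * ∫ x in Set.Ioi (0:ℝ), Real.sin (a * x) * x^(e-2) 
     = a * Real.exp (Real.log (Real.Gamma (1+e)) - Real.log a * e) * Real.cos (Real.pi * e / 2) := by
  have f := (fubini1 a e h0 h1).trans (fubini2 a e ha h0 h1)
  set J := ∫ x in Set.Ioi (0:ℝ), Real.sin (a * x) * x^(e-2)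
  have g1 : Real.Gamma (2-e) = (1-e) * Real.Gamma (1-e) := by
    rw [← Real.Gamma_add_one (by linarith)]; ring_nf
  have g2 : Real.Gamma (1+e) = e * Real.Gamma e := by
    rw [add_comm, Real.Gamma_add_one h0.ne']
  have r1 := Real.Gamma_mul_Gamma_one_sub e
  have r2 := Real.Gamma_mul_Gamma_one_sub (e/2)
  have pa : (a^2)^(-(e/2)) = Real.exp (-Real.log a * e) := by
    rw [Real.rpow_def_of_pos (by positivity), Real.log_pow]; push_cast; ring_nf
  have gp : 0 < Real.Gamma (1-e) := Real.Gamma_pos_of_pos (by linarith)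
  have gp1 : 0 < Real.Gamma (1+e) := Real.Gamma_pos_of_pos (by linarith)
  rw [sub_eq_add_neg (Real.log _), Real.exp_add, Real.exp_log gp1, ← neg_mul, ← pa, g2]
  have hs2 : 0 < Real.sin (Real.pi * (e/2)) := Real.sin_pos_of_pos_of_lt_pi (by positivity) (by nlinarith [Real.pi_pos])
  have hc2 : 0 < Real.cos (Real.pi * (e/2)) := Real.cos_pos_of_mem_Ioo ⟨by nlinarith [Real.pi_pos], by nlinarith [Real.pi_pos]⟩
  have hs : Real.sin (Real.pi * e) = 2 * Real.sin (Real.pi * (e/2)) * Real.cos (Real.pi * (e/2)) := by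
    rw [← Real.sin_two_mul]; ring_nf
  rw [hs, eq_div_iff (by positivity)] at r1
  rw [eq_div_iff (by positivity)] at r2
  rw [show Real.pi * e / 2 = Real.pi * (e/2) by ring]
  rw [g1] at f
  apply mul_left_cancel₀ (mul_pos gp hs2).ne'
  linear_combination e * Real.sin (Real.pi * (e/2)) * f + a * e * (a^2)^(-(e/2)) * (1/2) * r2 - a * e * (a^2)^(-(e/2)) * (1/2) * r1

/-- For every real `a > 0`, the absolutely convergent integral
`∫₁^∞ sin(ax)(ln x)²/x² dx` equals
`a[γ(-γ+2-ln a)ln a + (π²/12)(ln a - 1 + γ) - (2/3)ζ(3) - 2 ln a + (ln a)²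
  - (1/3)(ln a)³ - γ³/3 - 2γ + γ² + 2] - 2a Σ_{n≥1} (-a²)^n/((2n+1)! (2n)³)`,
with `ζ(3) = Σ_{n≥1} 1/n³`, the series converging absolutely. -/
theorem sin_log_sq_integral (a : ℝ) (ha : 0 < a) :
    IntegrableOn (fun x : ℝ => Real.sin (a * x) * Real.log x ^ 2 / x ^ 2)
      (Set.Ioi (1 : ℝ)) ∧
    Summable (fun n : ℕ =>
      |(-a ^ 2) ^ (n + 1) / ((2 * (n + 1) + 1).factorial * (2 * (n + 1) : ℝ) ^ 3)|) ∧
    (∫ x in Set.Ioi (1 : ℝ), Real.sin (a * x) * Real.log x ^ 2 / x ^ 2) =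
      a * (Real.eulerMascheroniConstant *
              (-Real.eulerMascheroniConstant + 2 - Real.log a) * Real.log a +
            (Real.pi ^ 2 / 12) * (Real.log a - 1 + Real.eulerMascheroniConstant) -
            (2 / 3) * (∑' n : ℕ, (1 : ℝ) / ((n : ℝ) + 1) ^ 3) -
            2 * Real.log a + Real.log a ^ 2 - (1 / 3) * Real.log a ^ 3 -
            Real.eulerMascheroniConstant ^ 3 / 3 - 2 * Real.eulerMascheroniConstant +
            Real.eulerMascheroniConstant ^ 2 + 2) -
        2 * a * ∑' n : ℕ,
          (-a ^ 2) ^ (n + 1) / ((2 * (n + 1) + 1).factorial * (2 * (n + 1) : ℝ) ^ 3) := by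
  have hsum : Summable (fun n : ℕ =>
      |(-a ^ 2) ^ (n + 1) / ((2 * (n + 1) + 1).factorial * (2 * (n + 1) : ℝ) ^ 3)|) ∧
      a * ∑' n : ℕ, (-a ^ 2) ^ (n + 1) / ((2 * (n + 1) + 1).factorial * (2 * (n + 1) : ℝ) ^ 3)
        = ∑' n : ℕ, bco a (n+1) * (1 / (2 * ((n:ℝ)+1))^3) := by
    have key : ∀ n : ℕ, bco a (n+1) * (1 / (2 * ((n:ℝ)+1))^3) =
        a * ((-a ^ 2) ^ (n + 1) / ((2 * (n + 1) + 1).factorial * (2 * (n + 1) : ℝ) ^ 3)) := by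
      intro n
      unfold bco
      rw [neg_pow (a^2), ← pow_mul, pow_succ a (2*(n+1)), mul_one_div, div_div]
      ring
    constructor
    · have h := ((div_summable a _ (fun n => w_bound n 3)).mul_left a⁻¹).abs
      refine h.congr fun n => ?_
      rw [key, inv_mul_cancel_left₀ ha.ne']
    · rw [← tsum_mul_left]
      exact tsum_congr fun n => (key n).symm
  refine ⟨int_log_pow a 2 (by norm_num), hsum.1, ?_⟩
  rw [mul_assoc 2 a, hsum.2]
  obtain ⟨I0, I1, hI⟩ := I_expand a
  obtain ⟨B0, B1, hB⟩ := S_expand a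
  set I2 := ∫ x in Set.Ioi (1 : ℝ), Real.sin (a * x) * Real.log x ^ 2 / x ^ 2
  set B2 := ∑' n : ℕ, bco a (n+1) * (1 / (2 * ((n:ℝ)+1))^3)
  set Z := ∑' n : ℕ, (1 : ℝ) / ((n : ℝ) + 1) ^ 3 with hZ
  set γ := Real.eulerMascheroniConstant with hγ
  set L := Real.log a with hL
  have hu : (fun e => (Real.log (Real.Gamma (1+e)) - L * e) -
      (-(γ + L) * e + Real.pi^2/12 * e^2 + (-(Z/3)) * e^3)) =O[𝓝[>] 0] fun e => e ^ 4 := by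
    refine IsBigO.of_bound (Real.pi^2/3) ?_
    filter_upwards [Ioo_mem_nhdsGT (show (0:ℝ) < 1/2 by norm_num)] with e he
    have h := logGamma_bound e he.1 he.2.le
    rw [Real.norm_eq_abs, Real.norm_of_nonneg (by have := he.1; positivity)]
    refine le_trans (le_of_eq ?_) h
    congr 1; ring
  have hK := (exp_cos_expand _ _ _ _ hu).const_mul_left a
  have hE : (fun e : ℝ => e * (1-e)) =O[𝓝[>] 0] fun e => e := by
    have t : Tendsto (fun e : ℝ => 1 - e) (𝓝[>] 0) (𝓝 (1-0)) :=
      tendsto_nhdsWithin_of_tendsto_nhds (Continuous.continuousAt (by fun_prop))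
    exact ((isBigO_refl (fun e : ℝ => e) (𝓝[>] 0)).mul (t.isBigO_one ℝ)).congr_right fun e => mul_one e
  have hIS : (fun e : ℝ => e * (1-e) * ((∫ x in Set.Ioi (1 : ℝ), Real.sin (a * x) * x^(e-2)) -
     (I0 + I1 * e + I2/2 * e^2) + ((∫ x in Set.Ioc (0 : ℝ) 1, Real.sin (a * x) * x^(e-2)) - a / e -
     (B0 + B1 * e + B2 * e^2)))) =O[𝓝[>] 0] fun e => e^4 :=
    (hE.mul (hI.add hB)).congr_right fun e => by ring
  have hc : Continuous (fun _ : ℝ => -(I2/2 + B2)) := by fun_prop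
  have h4 := bigO_of_cont (fun e => -(I2/2 + B2) * e^4) _ hc (fun e => by ring)
  have hfin : (fun e : ℝ => 0 + (I0 + B0 - a - a * (-(γ+L))) * e
     + (I1 + B1 - (I0 + B0) - a * ((-(γ+L))^2/2 + Real.pi^2/12 - Real.pi^2/8)) * e^2
     + (I2/2 + B2 - (I1 + B1) - a * ((-(γ+L))^3/6 + (-(γ+L)) * (Real.pi^2/12) + (-(Z/3)) - (-(γ+L)) * Real.pi^2/8)) * e^3)
      =O[𝓝[>] 0] fun e => e^4 := by
    refine ((hK.sub hIS).sub h4).congr' ?_ EventuallyEq.rfl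
    filter_upwards [Ioo_mem_nhdsGT (show (0:ℝ) < 1/2 by norm_num)] with e he
    obtain ⟨he0, he1⟩ := he
    have hJ := J_val a e ha he0 (by linarith)
    have hi := int_J a e he0 (by linarith)
    rw [← Set.Ioc_union_Ioi_eq_Ioi (zero_le_one' ℝ)] at hJ hi
    rw [setIntegral_union (Set.Ioc_disjoint_Ioi le_rfl) measurableSet_Ioi hi.left_of_union hi.right_of_union] at hJ
    have hae : e * (1-e) * (a/e) = a * (1-e) := by field_simp
    linear_combination -hJ + hae
  obtain ⟨-, q1, q2, q3⟩ := poly_unique _ _ _ _ hfin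
  linear_combination 2 * q1 + 2 * q2 + 2 * q3
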